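/- arXiv:2411.18131 — 2 statements merged into one kernel-verified Lean document; each statement's English description precedes it below -/
import Mathlib

section
/- Let C_n be the number of king permutations of length n that do not begin with the value 1 and do not end with the value n (with C_0 = 1, C_1 = 0), and let C(t) = Σ_{n≥0} C_n t^n. Then (1+t)^2·C(t) = t(1+t) + A(t) as formal power series over ℚ. -/
/-- A permutation of `{0, …, n-1}` is a *king permutation* if consecutive entries
differ by more than 1 in absolute value. -/
def IsKing {n : ℕ} (σ : Equiv.Perm (Fin n)) : Prop :=
  ∀ i : Fin n, ∀ h : (i : ℕ) + 1 < n,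
    1 < |((σ ⟨(i : ℕ) + 1, h⟩ : ℕ) : ℤ) - ((σ i : ℕ) : ℤ)|

/-- `kingCount n = A_n`, the number of king permutations of length `n`. -/
noncomputable def kingCount (n : ℕ) : ℕ :=
  Nat.card {σ : Equiv.Perm (Fin n) // IsKing σ}

/-- `A(t) = Σ_{n≥0} A_n t^n` as a formal power series over `ℚ`. -/
noncomputable def kingA : PowerSeries ℚ :=
  PowerSeries.mk fun n => (kingCount n : ℚ)

/-- `Ccount n = C_n`, the number of king permutations of length `n` that do not
begin with the smallest value and do not end with the largest value. -/
noncomputable def Ccount (n : ℕ) : ℕ :=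
  Nat.card {σ : Equiv.Perm (Fin n) // IsKing σ ∧
    (∀ h : 0 < n, σ ⟨0, h⟩ ≠ ⟨0, h⟩) ∧
    (∀ h : 0 < n, σ ⟨n - 1, by omega⟩ ≠ ⟨n - 1, by omega⟩)}

/-- `C(t) = Σ_{n≥0} C_n t^n` as a formal power series over `ℚ`. -/
noncomputable def kingC : PowerSeries ℚ :=
  PowerSeries.mk fun n => (Ccount n : ℚ)

noncomputable def cnt {n : ℕ} (P : Equiv.Perm (Fin n) → Prop) : ℕ := Nat.card {σ // P σ}

def SS {n : ℕ} (σ : Equiv.Perm (Fin n)) : Prop := ∀ h : 0 < n, σ ⟨0, h⟩ ≠ ⟨0, h⟩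
def EE {n : ℕ} (σ : Equiv.Perm (Fin n)) : Prop :=
  ∀ h : 0 < n, σ ⟨n - 1, by omega⟩ ≠ ⟨n - 1, by omega⟩

theorem cnt_split {n : ℕ} (P Q : Equiv.Perm (Fin n) → Prop) :
    cnt P = cnt (fun σ => P σ ∧ Q σ) + cnt (fun σ => P σ ∧ ¬ Q σ) := by
  classical
  unfold cnt
  simp only [Nat.card_eq_fintype_card, Fintype.card_subtype]
  rw [← Finset.card_filter_add_card_filter_not (s := Finset.univ.filter P) Q,
    Finset.filter_filter, Finset.filter_filter]

theorem cnt_congr {n : ℕ} {P Q : Equiv.Perm (Fin n) → Prop} (h : ∀ σ, P σ ↔ Q σ) :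
    cnt P = cnt Q := by
  have : P = Q := funext fun σ => propext (h σ)
  rw [this]

def up {n : ℕ} (σ : Equiv.Perm (Fin n)) : Equiv.Perm (Fin (n+1)) :=
  Equiv.Perm.decomposeFin.symm (0, σ)

theorem up_zero {n : ℕ} (σ : Equiv.Perm (Fin n)) : up σ 0 = 0 := by
  simp [up]

theorem up_succ {n : ℕ} (σ : Equiv.Perm (Fin n)) (i : Fin n) : up σ i.succ = (σ i).succ := by
  simp [up]

theorem up_mk {n : ℕ} (σ : Equiv.Perm (Fin n)) (i : ℕ) (h : i + 1 < n + 1) :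
    up σ ⟨i+1, h⟩ = (σ ⟨i, by omega⟩).succ := up_succ σ ⟨i, by omega⟩

theorem cnt_shift {n : ℕ} (Q : Equiv.Perm (Fin (n+1)) → Prop) :
    cnt (fun τ => τ 0 = 0 ∧ Q τ) = cnt (fun σ => Q (up σ)) := by
  symm
  refine Nat.card_congr (Equiv.ofBijective
    (fun σ => ⟨up σ.1, up_zero _, σ.2⟩) ⟨?_, ?_⟩)
  · rintro ⟨a, ha⟩ ⟨b, hb⟩ h
    have h1 : up a = up b := congrArg Subtype.val h
    have := Equiv.Perm.decomposeFin.symm.injective h1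
    simpa using this
  · rintro ⟨τ, h0, hQ⟩
    obtain ⟨⟨p, σ⟩, rfl⟩ := Equiv.Perm.decomposeFin.symm.surjective τ
    have : p = 0 := by simpa using h0
    subst this
    exact ⟨⟨σ, hQ⟩, rfl⟩

theorem king_up {n : ℕ} (σ : Equiv.Perm (Fin n)) : IsKing (up σ) ↔ IsKing σ ∧ SS σ := by
  constructor
  · intro h
    refine ⟨fun i hi => ?_, fun hn h0 => ?_⟩
    · have := h i.succ (by simpa using hi)
      simp only [Fin.val_succ, up_mk, up_succ] at this
      push_cast at this
      simpa using this
    · have := h 0 (by simpa using hn)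
      simp only [Fin.val_zero, up_mk, up_zero, h0] at this
      simp at this
  · rintro ⟨h, hs⟩ i hi
    rcases Fin.eq_zero_or_eq_succ i with rfl | ⟨j, rfl⟩
    · have hn : 0 < n := by simpa using hi
      have h1 := hs hn
      have h2 : (σ ⟨0, hn⟩ : ℕ) ≠ 0 := fun h => h1 (Fin.ext h)
      simp only [Fin.val_zero, up_mk, up_zero]
      rw [lt_abs]; left
      simp only [Fin.val_succ]; push_cast; omega
    · have := h j (by simpa using hi)
      simp only [Fin.val_succ, up_mk, up_succ]
      push_cast
      simpa using this

theorem end_up {n : ℕ} (hn : 0 < n) (σ : Equiv.Perm (Fin n)) : EE (up σ) ↔ EE σ := by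
  obtain ⟨m, rfl⟩ : ∃ m, n = m + 1 := ⟨n - 1, by omega⟩
  simp only [EE, Nat.add_sub_cancel, up_mk, Fin.ext_iff, Fin.val_succ, ne_eq]
  simp

theorem cnt_rev {n : ℕ} (P : Equiv.Perm (Fin n) → Prop) :
    cnt P = cnt (fun σ => P (Fin.revPerm.permCongr σ)) := by
  symm
  exact Nat.card_congr (Equiv.subtypeEquiv (Fin.revPerm.permCongr) (fun _ => Iff.rfl))

theorem king_rev' {n : ℕ} (σ : Equiv.Perm (Fin n)) (h : IsKing σ) :
    IsKing (Fin.revPerm.permCongr σ) := by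
  intro i hi
  have h1 := h (Fin.rev ⟨i+1, hi⟩) (by simp only [Fin.val_rev]; omega)
  have e : (⟨(Fin.rev ⟨(i:ℕ)+1, hi⟩ : Fin n) + 1, by simp only [Fin.val_rev]; omega⟩ : Fin n)
      = Fin.rev i := by
    ext; simp only [Fin.val_rev]; omega
  rw [e] at h1
  simp only [Equiv.permCongr_apply, Fin.revPerm_symm, Fin.revPerm_apply, Fin.val_rev]
  have a := (σ (Fin.rev i)).isLt
  have b := (σ (Fin.rev ⟨i+1, hi⟩)).isLt
  rw [lt_abs] at h1 ⊢
  omega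

theorem rev_rev {n : ℕ} (σ : Equiv.Perm (Fin n)) :
    Fin.revPerm.permCongr (Fin.revPerm.permCongr σ) = σ := by
  ext; simp

theorem king_rev {n : ℕ} (σ : Equiv.Perm (Fin n)) :
    IsKing (Fin.revPerm.permCongr σ) ↔ IsKing σ :=
  ⟨fun h => by simpa only [rev_rev] using king_rev' _ h, king_rev' σ⟩

theorem start_rev {n : ℕ} (σ : Equiv.Perm (Fin n)) : SS (Fin.revPerm.permCongr σ) ↔ EE σ := by
  refine forall_congr' fun hn => not_congr ?_
  have e : Fin.rev (⟨0, hn⟩ : Fin n) = ⟨n-1, by omega⟩ := by ext; simp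
  simp only [Equiv.permCongr_apply, Fin.revPerm_symm, Fin.revPerm_apply]
  rw [Fin.rev_eq_iff, e]

theorem end_rev {n : ℕ} (σ : Equiv.Perm (Fin n)) : EE (Fin.revPerm.permCongr σ) ↔ SS σ := by
  rw [← start_rev, rev_rev]

theorem not_start {n : ℕ} (σ : Equiv.Perm (Fin (n+1))) : ¬ SS σ ↔ σ 0 = 0 := by
  simp [SS]

theorem kingCount_succ (n : ℕ) : kingCount (n+1) =
    cnt (fun σ : Equiv.Perm (Fin (n+1)) => IsKing σ ∧ SS σ)
      + cnt (fun σ : Equiv.Perm (Fin n) => IsKing σ ∧ SS σ) := by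
  change cnt IsKing = _
  rw [cnt_split IsKing SS]
  congr 1
  rw [cnt_congr (Q := fun τ => τ 0 = 0 ∧ IsKing τ) (fun σ => by rw [not_start, and_comm]),
    cnt_shift]
  exact cnt_congr king_up

theorem B_succ (n : ℕ) (hn : 0 < n) :
    cnt (fun σ : Equiv.Perm (Fin (n+1)) => IsKing σ ∧ SS σ) = Ccount (n+1) + Ccount n := by
  rw [cnt_split _ EE]
  congr 1
  · exact cnt_congr fun σ => and_assoc
  · rw [cnt_rev, cnt_congr (Q := fun τ => τ 0 = 0 ∧ (IsKing τ ∧ EE τ))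
      (fun σ => by rw [king_rev, start_rev, end_rev, not_start, and_comm]), cnt_shift]
    refine cnt_congr fun σ => ?_
    rw [king_up, end_up hn, and_assoc]; rfl

theorem B_zero : cnt (fun σ : Equiv.Perm (Fin 0) => IsKing σ ∧ SS σ) = 1 := by
  unfold cnt
  rw [Nat.card_eq_one_iff_unique]
  exact ⟨⟨fun a b => Subtype.ext (Subsingleton.elim _ _)⟩, ⟨1, fun i => i.elim0, fun h => absurd h (lt_irrefl _)⟩⟩

theorem A_zero : kingCount 0 = 1 := by
  unfold kingCount
  rw [Nat.card_eq_one_iff_unique]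
  exact ⟨⟨fun a b => Subtype.ext (Subsingleton.elim _ _)⟩, ⟨1, fun i => i.elim0⟩⟩

theorem C_zero : Ccount 0 = 1 := by
  unfold Ccount
  rw [Nat.card_eq_one_iff_unique]
  exact ⟨⟨fun a b => Subtype.ext (Subsingleton.elim _ _)⟩, ⟨1, fun i => i.elim0,
    fun h => absurd h (lt_irrefl _), fun h => absurd h (lt_irrefl _)⟩⟩

theorem B_one : cnt (fun σ : Equiv.Perm (Fin 1) => IsKing σ ∧ SS σ) = 0 := by
  unfold cnt
  rw [Nat.card_eq_zero]
  exact Or.inl ⟨fun ⟨σ, h⟩ => h.2 one_pos (Subsingleton.elim _ _)⟩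

theorem C_one : Ccount 1 = 0 := by
  unfold Ccount
  rw [Nat.card_eq_zero]
  exact Or.inl ⟨fun ⟨σ, h⟩ => h.2.1 one_pos (Subsingleton.elim _ _)⟩

noncomputable def kingB : PowerSeries ℚ :=
  PowerSeries.mk fun n => (cnt (fun σ : Equiv.Perm (Fin n) => IsKing σ ∧ SS σ) : ℚ)

theorem A_eq : (1 + PowerSeries.X) * kingB = kingA := by
  ext n
  rw [add_mul, one_mul, map_add]
  rcases n with _ | n
  · rw [PowerSeries.coeff_zero_X_mul]
    simp only [kingA, kingB, PowerSeries.coeff_mk]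
    simp [A_zero, B_zero]
  · rw [PowerSeries.coeff_succ_X_mul]
    simp only [kingA, kingB, PowerSeries.coeff_mk, kingCount_succ]
    push_cast; rfl

theorem B_eq : (1 + PowerSeries.X) * kingC = PowerSeries.X + kingB := by
  ext n
  rw [add_mul, one_mul, map_add, map_add]
  rcases n with _ | _ | n
  · rw [PowerSeries.coeff_zero_X_mul]
    simp only [kingC, kingB, PowerSeries.coeff_mk]
    simp [C_zero, B_zero]
  · rw [PowerSeries.coeff_succ_X_mul]
    simp only [kingC, kingB, PowerSeries.coeff_mk, zero_add]
    simp [C_zero, B_one, C_one]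
  · rw [PowerSeries.coeff_succ_X_mul]
    simp only [kingC, kingB, PowerSeries.coeff_mk, B_succ (n+1) (by omega)]
    simp [PowerSeries.coeff_X]

theorem statement_1 :
    (1 + PowerSeries.X) ^ 2 * kingC
      = PowerSeries.X * (1 + PowerSeries.X) + kingA := by
  rw [pow_two, mul_assoc, B_eq, ← A_eq]; ring
end

section
/- Let p_n be the number of king permutations of length n having no strong fixed point, and P(t) = Σ_{n≥0} p_n t^n. Then (1 + t + t·A(t))·P(t) = (1+t)·A(t) as formal power series over ℚ. -/
/-- `i` is a *strong fixed point* of `σ`: all earlier entries are smaller and all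
later entries are larger. -/
def IsStrongFixedPoint {n : ℕ} (σ : Equiv.Perm (Fin n)) (i : Fin n) : Prop :=
  (∀ j : Fin n, j < i → σ j < σ i) ∧ (∀ j : Fin n, i < j → σ i < σ j)

/-- `Pcount n = p_n`, the number of king permutations of length `n` having no
strong fixed point. -/
noncomputable def Pcount (n : ℕ) : ℕ :=
  Nat.card {σ : Equiv.Perm (Fin n) //
    IsKing σ ∧ ∀ i : Fin n, ¬ IsStrongFixedPoint σ i}

/-- `P(t) = Σ_{n≥0} p_n t^n` as a formal power series over `ℚ`. -/
noncomputable def kingP : PowerSeries ℚ :=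
  PowerSeries.mk fun n => (Pcount n : ℚ)

/-- First strong fixed point of `σ` is `i`. -/
def FirstSFP {n : ℕ} (σ : Equiv.Perm (Fin n)) (i : Fin n) : Prop :=
  IsStrongFixedPoint σ i ∧ ∀ j, j < i → ¬ IsStrongFixedPoint σ j

noncomputable def Bcount (n : ℕ) : ℕ :=
  Nat.card {σ : Equiv.Perm (Fin n) // IsKing σ ∧ ∀ h : 0 < n, (σ ⟨0, h⟩ : ℕ) ≠ 0}

lemma sfp_val {n : ℕ} (σ : Equiv.Perm (Fin n)) (i : Fin n) (h : IsStrongFixedPoint σ i) :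
    σ i = i := by
  have h1 : (Finset.Iio i).map σ.toEmbedding = Finset.Iio (σ i) := by
    ext x
    simp only [Finset.mem_map, Finset.mem_Iio]
    constructor
    · rintro ⟨j, hj, rfl⟩
      exact h.1 j hj
    · intro hx
      refine ⟨σ.symm x, ?_, by simp⟩
      by_contra hc
      rcases (not_lt.mp hc).lt_or_eq with h2 | h2
      · have := h.2 _ h2
        simp at this
        exact absurd hx (not_lt.mpr this.le)
      · rw [h2] at hx
        simp at hx
  have := congrArg Finset.card h1
  simp at this
  ext
  omega

def dsum {a b : ℕ} (α : Equiv.Perm (Fin a)) (β : Equiv.Perm (Fin b)) :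
    Equiv.Perm (Fin (a + b)) :=
  (finSumFinEquiv.symm.trans (Equiv.sumCongr α β)).trans finSumFinEquiv

lemma dsum_left {a b : ℕ} (α : Equiv.Perm (Fin a)) (β : Equiv.Perm (Fin b)) (k : ℕ)
    (h : k < a) (h' : k < a + b) : (dsum α β ⟨k, h'⟩ : ℕ) = α ⟨k, h⟩ := by
  have : (⟨k, h'⟩ : Fin (a + b)) = Fin.castAdd b ⟨k, h⟩ := rfl
  rw [this]
  simp only [dsum, Equiv.trans_apply, finSumFinEquiv_symm_apply_castAdd, finSumFinEquiv_symm_apply_natAdd, Equiv.sumCongr_apply, Sum.map_inl, Sum.map_inr, finSumFinEquiv_apply_left, finSumFinEquiv_apply_right, Fin.val_castAdd, Fin.val_natAdd]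

lemma dsum_right {a b : ℕ} (α : Equiv.Perm (Fin a)) (β : Equiv.Perm (Fin b)) (k : ℕ)
    (h : k < b) (h' : a + k < a + b) : (dsum α β ⟨a + k, h'⟩ : ℕ) = a + β ⟨k, h⟩ := by
  have : (⟨a + k, h'⟩ : Fin (a + b)) = Fin.natAdd a ⟨k, h⟩ := rfl
  rw [this]
  simp only [dsum, Equiv.trans_apply, finSumFinEquiv_symm_apply_castAdd, finSumFinEquiv_symm_apply_natAdd, Equiv.sumCongr_apply, Sum.map_inl, Sum.map_inr, finSumFinEquiv_apply_left, finSumFinEquiv_apply_right, Fin.val_castAdd, Fin.val_natAdd]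

lemma exists_dsum {a b : ℕ} (σ : Equiv.Perm (Fin (a + b)))
    (h : ∀ k : Fin (a + b), (k : ℕ) < a → (σ k : ℕ) < a) :
    ∃ (α : Equiv.Perm (Fin a)) (β : Equiv.Perm (Fin b)), dsum α β = σ := by
  have := Equiv.Perm.mem_sumCongrHom_range_of_perm_mapsTo_inl
    (σ := (finSumFinEquiv.trans σ).trans finSumFinEquiv.symm) (m := Fin a) (n := Fin b) ?_
  · obtain ⟨⟨α, β⟩, hs⟩ := this
    refine ⟨α, β, ?_⟩
    ext x
    have := congrArg (fun f => finSumFinEquiv (f (finSumFinEquiv.symm x))) hs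
    simp at this
    simp [dsum, ← this]
  · rintro _ ⟨x, rfl⟩
    have := h (Fin.castAdd b x) (by simp)
    refine ⟨⟨_, this⟩, ?_⟩
    simp only [Equiv.trans_apply, finSumFinEquiv_apply_left]
    rw [Equiv.eq_symm_apply]
    rfl

def j3 {a b : ℕ} (α : Equiv.Perm (Fin a)) (β : Equiv.Perm (Fin b)) :
    Equiv.Perm (Fin (a + 1 + b)) := dsum (dsum α (1 : Equiv.Perm (Fin 1))) β

lemma j3_left {a b : ℕ} (α : Equiv.Perm (Fin a)) (β : Equiv.Perm (Fin b)) (k : ℕ)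
    (h : k < a) (h' : k < a + 1 + b) : (j3 α β ⟨k, h'⟩ : ℕ) = α ⟨k, h⟩ := by
  rw [j3, dsum_left _ _ _ (by omega), dsum_left _ _ _ h]

lemma j3_mid {a b : ℕ} (α : Equiv.Perm (Fin a)) (β : Equiv.Perm (Fin b))
    (h' : a < a + 1 + b) : (j3 α β ⟨a, h'⟩ : ℕ) = a := by
  rw [j3, dsum_left _ _ _ (by omega)]
  exact dsum_right α (1 : Equiv.Perm (Fin 1)) 0 (by omega) (by omega)

lemma j3_right {a b : ℕ} (α : Equiv.Perm (Fin a)) (β : Equiv.Perm (Fin b)) (k : ℕ)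
    (h : k < b) (h' : a + 1 + k < a + 1 + b) :
    (j3 α β ⟨a + 1 + k, h'⟩ : ℕ) = a + 1 + β ⟨k, h⟩ := by
  rw [j3, dsum_right _ _ _ h]

lemma j3_inj {a b : ℕ} {α α' : Equiv.Perm (Fin a)} {β β' : Equiv.Perm (Fin b)}
    (h : j3 α β = j3 α' β') : α = α' ∧ β = β' := by
  constructor
  · ext ⟨k, hk⟩
    rw [← j3_left α β k hk (by omega), h, j3_left]
  · ext ⟨k, hk⟩
    have h1 := j3_right α β k hk (by omega)
    rw [h, j3_right _ _ _ hk] at h1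
    omega

lemma j3_sfp_mid {a b : ℕ} (α : Equiv.Perm (Fin a)) (β : Equiv.Perm (Fin b))
    (h' : a < a + 1 + b) : IsStrongFixedPoint (j3 α β) ⟨a, h'⟩ := by
  constructor
  · rintro ⟨k, hk⟩ hlt
    simp only [Fin.mk_lt_mk] at hlt
    rw [Fin.lt_def, j3_mid, j3_left _ _ _ hlt]
    exact (α _).2
  · rintro ⟨k, hk⟩ hlt
    simp only [Fin.mk_lt_mk] at hlt
    obtain ⟨k, rfl⟩ := Nat.exists_eq_add_of_le (Nat.succ_le_of_lt hlt)
    rw [Fin.lt_def, j3_mid, j3_right _ _ _ (by omega)]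
    omega

lemma j3_sfp_left {a b : ℕ} (α : Equiv.Perm (Fin a)) (β : Equiv.Perm (Fin b)) (k : ℕ)
    (h : k < a) (h' : k < a + 1 + b) :
    IsStrongFixedPoint (j3 α β) ⟨k, h'⟩ ↔ IsStrongFixedPoint α ⟨k, h⟩ := by
  constructor
  · rintro ⟨h1, h2⟩
    constructor
    · rintro ⟨j, hj⟩ hlt
      have := h1 ⟨j, by omega⟩ hlt
      rwa [Fin.lt_def, j3_left _ _ _ hj, j3_left _ _ _ h] at this
    · rintro ⟨j, hj⟩ hlt
      have := h2 ⟨j, by omega⟩ hlt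
      rwa [Fin.lt_def, j3_left _ _ _ hj, j3_left _ _ _ h] at this
  · rintro ⟨h1, h2⟩
    constructor
    · rintro ⟨j, hj⟩ hlt
      simp only [Fin.mk_lt_mk] at hlt
      rw [Fin.lt_def, j3_left _ _ _ h, j3_left _ _ _ (by omega)]
      exact h1 ⟨j, by omega⟩ hlt
    · rintro ⟨j, hj⟩ hlt
      simp only [Fin.mk_lt_mk] at hlt
      have hb := (α ⟨k, h⟩).2
      rcases lt_trichotomy j a with hja | rfl | hja
      · rw [Fin.lt_def, j3_left _ _ _ h, j3_left _ _ _ hja]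
        exact h2 ⟨j, by omega⟩ hlt
      · rw [Fin.lt_def, j3_left _ _ _ h, j3_mid]
        exact hb
      · obtain ⟨j, rfl⟩ := Nat.exists_eq_add_of_le (Nat.succ_le_of_lt hja)
        rw [Fin.lt_def, j3_left _ _ _ h, j3_right _ _ _ (by omega)]
        omega

/-- a permutation ending with its maximum has a strong fixed point -/
lemma sfp_last {a : ℕ} (α : Equiv.Perm (Fin a)) (k : ℕ) (h : k < a) (hk : k + 1 = a)
    (hv : (α ⟨k, h⟩ : ℕ) + 1 = a) : IsStrongFixedPoint α ⟨k, h⟩ := by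
  constructor
  · rintro ⟨j, hj⟩ hlt
    have h1 : α ⟨j, hj⟩ ≠ α ⟨k, h⟩ := fun e => by
      rw [α.injective e] at hlt
      exact lt_irrefl _ hlt
    have h2 := (α ⟨j, hj⟩).2
    rw [Fin.lt_def]
    rw [Ne, Fin.ext_iff] at h1
    omega
  · rintro ⟨j, hj⟩ hlt
    simp only [Fin.mk_lt_mk] at hlt
    omega

lemma j3_king {a b : ℕ} (α : Equiv.Perm (Fin a)) (β : Equiv.Perm (Fin b))
    (hn : ∀ i, ¬ IsStrongFixedPoint α i) :
    IsKing (j3 α β) ↔ IsKing α ∧ IsKing β ∧ ∀ h : 0 < b, (β ⟨0, h⟩ : ℕ) ≠ 0 := by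
  constructor
  · intro hk
    refine ⟨?_, ?_, ?_⟩
    · rintro ⟨k, hka⟩ h
      have := hk ⟨k, by omega⟩ (by simp only at h ⊢; omega)
      simp only at this h
      rwa [j3_left _ _ _ h, j3_left _ _ _ hka] at this
    · rintro ⟨k, hka⟩ h
      have := hk ⟨a + 1 + k, by omega⟩ (by simp only at h ⊢; omega)
      simp only [add_assoc (a + 1)] at this h
      rw [j3_right _ _ _ h, j3_right _ _ _ hka] at this
      simpa using this
    · intro h h0
      have := hk ⟨a, by omega⟩ (by simp only; omega)
      have e := j3_right α β 0 h (by omega)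
      simp only [add_zero] at this e
      rw [j3_mid, e, h0] at this
      simp at this
  · rintro ⟨h1, h2, h3⟩
    rintro ⟨k, hk⟩ h
    simp only at h ⊢
    rcases lt_trichotomy k a with hka | rfl | hka
    · rcases Nat.lt_or_ge (k + 1) a with h4 | h4
      · rw [j3_left _ _ _ h4, j3_left _ _ _ hka]
        exact h1 ⟨k, hka⟩ h4
      · obtain rfl : a = k + 1 := by omega
        rw [j3_left _ _ _ hka, j3_mid]
        have h5 := hn ⟨k, hka⟩
        have h6 : ¬ ((α ⟨k, hka⟩ : ℕ) + 1 = k + 1) := fun hv => h5 (sfp_last α k hka rfl hv)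
        have h7 := (α ⟨k, hka⟩).2
        rw [lt_abs]
        left
        push_cast
        omega
    · have e := j3_right α β 0 (by omega) (by omega)
      simp only [add_zero] at e
      rw [j3_mid, e]
      have := h3 (by omega)
      rw [lt_abs]
      left
      push_cast
      omega
    · obtain ⟨k, rfl⟩ := Nat.exists_eq_add_of_le (Nat.succ_le_of_lt hka)
      have e := j3_right α β (k + 1) (by omega) (by omega)
      have := h2 ⟨k, by omega⟩ (by simp only; omega)
      have e2 : (⟨a.succ + k + 1, h⟩ : Fin (a + 1 + b)) = ⟨a + 1 + (k + 1), by omega⟩ := rfl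
      rw [e2, e, j3_right _ _ _ (by omega)]
      simpa using this

lemma exists_j3 {a b : ℕ} (σ : Equiv.Perm (Fin (a + 1 + b))) (h' : a < a + 1 + b)
    (h : IsStrongFixedPoint σ ⟨a, h'⟩) :
    ∃ (α : Equiv.Perm (Fin a)) (β : Equiv.Perm (Fin b)), j3 α β = σ := by
  have hv := sfp_val σ _ h
  obtain ⟨γ, β, rfl⟩ := exists_dsum σ (by
    rintro ⟨k, hk⟩ hka
    simp only at hka
    rcases Nat.lt_or_ge k a with h1 | h1
    · have := h.1 ⟨k, hk⟩ h1
      rw [hv, Fin.lt_def] at this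
      simp only at this
      omega
    · obtain rfl : k = a := by omega
      rw [hv]
      exact hka)
  obtain ⟨α, o, rfl⟩ := exists_dsum γ (by
    rintro ⟨k, hk⟩ hka
    simp only at hka
    have := h.1 ⟨k, by omega⟩ hka
    rw [hv, Fin.lt_def, dsum_left _ _ _ hk] at this
    exact this)
  refine ⟨α, β, ?_⟩
  rw [j3, Subsingleton.elim o 1]

lemma card_first {n a b : ℕ} (hn : n = a + 1 + b) (i : Fin n) (hi : (i : ℕ) = a) :
    Nat.card {σ : Equiv.Perm (Fin n) // IsKing σ ∧ FirstSFP σ i} = Pcount a * Bcount b := by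
  subst hn
  obtain ⟨i, hi'⟩ := i
  simp only at hi
  subst hi
  rw [Pcount, Bcount, ← Nat.card_prod]
  symm
  refine Nat.card_congr (Equiv.ofBijective
    (fun p => ⟨j3 p.1.1 p.2.1, (j3_king _ _ p.1.2.2).2 ⟨p.1.2.1, p.2.2⟩,
      j3_sfp_mid _ _ _, ?_⟩) ⟨?_, ?_⟩)
  · rintro ⟨j, hj⟩ hlt hs
    simp only [Fin.mk_lt_mk] at hlt
    exact p.1.2.2 _ ((j3_sfp_left _ _ _ hlt _).1 hs)
  · rintro ⟨⟨α, hα⟩, ⟨β, hβ⟩⟩ ⟨⟨α', hα'⟩, ⟨β', hβ'⟩⟩ h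
    simp only [Subtype.mk.injEq] at h
    obtain ⟨rfl, rfl⟩ := j3_inj h
    rfl
  · rintro ⟨σ, hk, hs, hf⟩
    obtain ⟨α, β, rfl⟩ := exists_j3 σ _ hs
    have hn : ∀ j, ¬ IsStrongFixedPoint α j := by
      rintro ⟨j, hj⟩ h
      exact hf ⟨j, by omega⟩ hj ((j3_sfp_left _ _ _ hj _).2 h)
    have := (j3_king α β hn).1 hk
    exact ⟨⟨⟨α, this.1, hn⟩, ⟨β, this.2⟩⟩, rfl⟩

lemma king_rec1 (n : ℕ) : kingCount (n + 1) = Bcount (n + 1) + Bcount n := by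
  have h0 : Pcount 0 = 1 := by
    rw [Pcount, Nat.card_eq_one_iff_unique]
    exact ⟨inferInstance, ⟨⟨1, fun i => i.elim0, fun i => i.elim0⟩⟩⟩
  have h1 := card_first (n := n + 1) (a := 0) (b := n) (by omega) 0 rfl
  rw [h0, one_mul] at h1
  rw [← h1, kingCount, Bcount]
  classical
  simp only [Nat.card_eq_fintype_card, Fintype.card_subtype]
  rw [← Finset.card_filter_add_card_filter_not
    (s := Finset.univ.filter fun σ : Equiv.Perm (Fin (n + 1)) => IsKing σ)
    (fun σ => (σ 0 : ℕ) ≠ 0), Finset.filter_filter, Finset.filter_filter]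
  congr 1
  · congr 1
    ext σ
    simp
  · congr 1
    ext σ
    simp only [Finset.mem_filter, Finset.mem_univ, true_and, not_not]
    refine and_congr_right fun _ => ⟨fun h => ⟨⟨?_, ?_⟩, ?_⟩, fun h => ?_⟩
    · intro j hj
      exact absurd hj (Fin.not_lt_zero j)
    · intro j hj
      have : σ 0 = 0 := Fin.ext h
      rw [this, Fin.pos_iff_ne_zero, ← this, Ne, σ.injective.eq_iff]
      exact hj.ne'
    · intro j hj
      exact absurd hj (Fin.not_lt_zero j)
    · rw [sfp_val σ _ h.1]
      rfl

lemma king_rec2 (n : ℕ) : kingCount n =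
    Pcount n + ∑ i : Fin n, Pcount i * Bcount (n - 1 - i) := by
  have : ∀ i : Fin n, Pcount i * Bcount (n - 1 - i) =
      Nat.card {σ : Equiv.Perm (Fin n) // IsKing σ ∧ FirstSFP σ i} := fun i =>
    (card_first (by omega) i rfl).symm
  simp only [this]
  rw [kingCount, Pcount]
  classical
  simp only [Nat.card_eq_fintype_card, Fintype.card_subtype, Finset.card_filter]
  rw [Finset.sum_comm, ← Finset.sum_add_distrib]
  refine Finset.sum_congr rfl fun σ _ => ?_
  by_cases hk : IsKing σ
  swap
  · simp [hk]
  simp only [hk, true_and, if_true]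
  by_cases hs : ∃ i, IsStrongFixedPoint σ i
  · rw [if_neg (by push Not; exact hs), zero_add]
    obtain ⟨i, hi, hm⟩ := WellFounded.has_min (wellFounded_lt (α := Fin n))
      {i | IsStrongFixedPoint σ i} hs
    have hi' : FirstSFP σ i := ⟨hi, fun j hj h => hm j h hj⟩
    rw [Finset.sum_eq_single i, if_pos hi']
    · intro j _ hj
      rw [if_neg]
      intro h
      rcases lt_or_gt_of_ne hj with h1 | h1
      · exact hi'.2 _ h1 h.1
      · exact h.2 _ h1 hi
    · simp
  · push Not at hs
    rw [if_pos hs, Finset.sum_eq_zero, add_zero]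
    intro i _
    rw [if_neg]
    exact fun h => hs i h.1

theorem statement_3 :
    (1 + PowerSeries.X + PowerSeries.X * kingA) * kingP
      = (1 + PowerSeries.X) * kingA := by
  set B : PowerSeries ℚ := PowerSeries.mk fun n => (Bcount n : ℚ) with hB
  have e1 : kingA = (1 + PowerSeries.X) * B := by
    ext n
    rw [add_mul, one_mul, map_add]
    cases n with
    | zero =>
      have : kingCount 0 = Bcount 0 := by simp [kingCount, Bcount]
      simp [kingA, hB, this]
    | succ n =>
      rw [PowerSeries.coeff_succ_X_mul]
      simp [kingA, hB, king_rec1]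
  have e2 : kingA = kingP + PowerSeries.X * (kingP * B) := by
    ext n
    rw [map_add]
    cases n with
    | zero =>
      have := king_rec2 0
      simp at this
      simp [kingA, kingP, this]
    | succ n =>
      rw [PowerSeries.coeff_succ_X_mul, PowerSeries.coeff_mul,
        Finset.Nat.sum_antidiagonal_eq_sum_range_succ_mk, Finset.sum_range]
      simp [kingA, kingP, hB, king_rec2 (n + 1)]
  linear_combination (-1 - PowerSeries.X) * e2 + PowerSeries.X * kingP * e1
end
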